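/- Let n ≥ 2 and g = 4π ∑_{j=1}^{k₁} m_j δ_{p_j}, h = 4π ∑_{j=1}^{k₂} n_j δ_{q_j} with m_j, n_j ∈ ℕ. For each λ > 0 let (u*_λ, v*_λ) denote the maximal topological solution of Δu = λ e^v (e^u − 1) + g, Δv = λ e^u (e^v − 1) + h on ℤⁿ (i.e. the topological solution dominating every other topological solution componentwise). Then the map λ ↦ (u*_λ, v*_λ) is monotone: for 0 < λ₁ < λ₂, u*_{λ₁} ≤ u*_{λ₂} and v*_{λ₁} ≤ v*_{λ₂} on ℤⁿ. -/

import Mathlib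

/-!
By the maximum principle a subsolution vanishing at infinity is nonpositive; since
`λ eᵛ (eᵘ - 1)` decreases in `λ` where `u ≤ 0`, it remains a subsolution for larger `λ`, while
`(0, 0)` is a supersolution because `g, h ≥ 0`. On nonpositive pairs the system is cooperative:
`λ eᵛ (eᵘ - 1)` is nonincreasing in `v`, and its `u`-derivative `λ eᵘ⁺ᵛ` is at most `λ`. Hence an
explicit Euler step of length `1 / (2n + λ)` for the associated parabolic system is order preserving
there, and Knaster–Tarski gives a solution between the subsolution and `(0, 0)`. Being squeezed,
this solution vanishes at infinity, so it is dominated by the maximal one.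
-/

open Filter Real

noncomputable section

namespace CS

abbrev Lat (n : ℕ) := Fin n → ℤ

/-- d(x) = ∑ᵢ |xᵢ|, the graph distance to the origin on ℤⁿ. -/
def latDist {n : ℕ} (x : Lat n) : ℕ := ∑ i, (x i).natAbs

/-- x ~ y iff ∑ᵢ |xᵢ − yᵢ| = 1. -/
def adjacent {n : ℕ} (x y : Lat n) : Prop := (∑ i, (x i - y i).natAbs) = 1

instance {n : ℕ} (x y : Lat n) : Decidable (adjacent x y) :=
  decidable_of_iff ((∑ i, (x i - y i).natAbs) = 1) Iff.rfl

def unitVec {n : ℕ} (i : Fin n) : Lat n := fun j => if j = i then 1 else 0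

/-- The graph Laplacian Δu(x) = ∑_{y ~ x} (u(y) − u(x)) on ℤⁿ. -/
def lapl {n : ℕ} (u : Lat n → ℝ) (x : Lat n) : ℝ :=
  ∑ i, (u (x + unitVec i) + u (x - unitVec i) - 2 * u x)

/-- The filter of neighborhoods of infinity (d(x) → +∞) on ℤⁿ. -/
def atInfty (n : ℕ) : Filter (Lat n) := Filter.comap latDist Filter.atTop

/-- The Dirac mass at p. -/
def dirac {n : ℕ} (p x : Lat n) : ℝ := if x = p then 1 else 0

/-- (u,v) is a topological solution of Δu = λ eᵛ(eᵘ−1) + g, Δv = λ eᵘ(eᵛ−1) + h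
with u, v → 0 at infinity. -/
def IsTopSol {n : ℕ} (lam : ℝ) (g h u v : Lat n → ℝ) : Prop :=
  (∀ x, lapl u x = lam * Real.exp (v x) * (Real.exp (u x) - 1) + g x) ∧
  (∀ x, lapl v x = lam * Real.exp (u x) * (Real.exp (v x) - 1) + h x) ∧
  Filter.Tendsto u (atInfty n) (nhds 0) ∧
  Filter.Tendsto v (atInfty n) (nhds 0)

/-- (u*, v*) is the maximal topological solution: it is a topological solution
dominating every other topological solution componentwise. -/
def IsMaxTopSol {n : ℕ} (lam : ℝ) (g h u v : Lat n → ℝ) : Prop :=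
  IsTopSol lam g h u v ∧
  ∀ u' v' : Lat n → ℝ, IsTopSol lam g h u' v' →
    (∀ x, u' x ≤ u x) ∧ (∀ x, v' x ≤ v x)

section Order

variable {α β : Type*}

theorem exists_isLUB_prod [ConditionallyCompleteLattice α] [ConditionallyCompleteLattice β]
    {s : Set (α × β)} (hne : s.Nonempty) (hbdd : BddAbove s) : ∃ c, IsLUB s c :=
  ⟨(sSup (Prod.fst '' s), sSup (Prod.snd '' s)), isLUB_prod.2
    ⟨isLUB_csSup (hne.image _) (monotone_fst.map_bddAbove hbdd),
      isLUB_csSup (hne.image _) (monotone_snd.map_bddAbove hbdd)⟩⟩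

/-- Knaster–Tarski. `OrderHom.lfp` would need a complete lattice, but `Set.Icc a b` is one only for
`a b` in a conditionally complete lattice, a structure that `α × β` does not carry in Mathlib. -/
theorem mem_Icc_and_isFixedPt_of_isLUB [PartialOrder α] {a b c : α} {T : α → α}
    (hT : MonotoneOn T (Set.Icc a b)) (hab : a ≤ b) (ha : a ≤ T a) (hb : T b ≤ b)
    (hc : IsLUB {w ∈ Set.Icc a b | w ≤ T w} c) : c ∈ Set.Icc a b ∧ Function.IsFixedPt T c := by
  have hcab : c ∈ Set.Icc a b := ⟨hc.1 ⟨⟨le_rfl, hab⟩, ha⟩, hc.2 fun w hw => hw.1.2⟩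
  have hcT : c ≤ T c := hc.2 fun w hw => hw.2.trans (hT hw.1 hcab (hc.1 hw))
  have hTab : T c ∈ Set.Icc a b :=
    ⟨hcab.1.trans hcT, (hT hcab ⟨hab, le_rfl⟩ hcab.2).trans hb⟩
  exact ⟨hcab, (hc.1 ⟨hTab, hT hcab hTab hcT⟩).antisymm hcT⟩

end Order

theorem exp_sub_exp_le_exp_mul_sub (x y : ℝ) : exp y - exp x ≤ exp y * (y - x) := by
  have htangent : exp y * (x - y + 1) ≤ exp y * exp (x - y) :=
    mul_le_mul_of_nonneg_left (add_one_le_exp _) (exp_pos _).le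
  rw [← exp_add, add_sub_cancel] at htangent
  linarith

theorem monotoneOn_sub_exp_mul_exp_sub_one :
    MonotoneOn (fun p : ℝ × ℝ => p.1 - exp p.2 * (exp p.1 - 1)) (Set.Iic 0) := by
  rintro ⟨s, t⟩ ⟨hs, -⟩ ⟨s', t'⟩ ⟨hs', ht'⟩ ⟨hss', htt'⟩
  have hslope : exp t' * exp s' ≤ 1 := by
    rw [← exp_add]
    exact exp_le_one_iff.2 (add_nonpos ht' hs')
  have hstep_s : exp t' * (exp s' - exp s) ≤ s' - s := calc
    exp t' * (exp s' - exp s) ≤ exp t' * (exp s' * (s' - s)) :=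
      mul_le_mul_of_nonneg_left (exp_sub_exp_le_exp_mul_sub s s') (exp_pos t').le
    _ = exp t' * exp s' * (s' - s) := (mul_assoc _ _ _).symm
    _ ≤ s' - s := mul_le_of_le_one_left (sub_nonneg.2 hss') hslope
  have hstep_t : exp t' * (exp s - 1) ≤ exp t * (exp s - 1) :=
    mul_le_mul_of_nonpos_right (exp_le_exp.2 htt') (sub_nonpos.2 (exp_le_one_iff.2 hs))
  change s - exp t * (exp s - 1) ≤ s' - exp t' * (exp s' - 1)
  linarith

section Lattice

variable {n : ℕ} {u v : Lat n → ℝ}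

theorem cofinite_le_atInfty : cofinite ≤ atInfty n := by
  refine map_le_iff_le_comap.1 (tendsto_atTop.2 fun N => ?_)
  refine (Set.finite_Icc (-N : Lat n) N).subset fun x (hx : ¬N ≤ latDist x) => ?_
  have hcoord : ∀ i, (x i).natAbs ≤ N := fun i =>
    (Finset.single_le_sum_of_canonicallyOrdered (f := fun i => (x i).natAbs)
      (Finset.mem_univ i)).trans (not_le.1 hx).le
  have habs : ∀ i, |x i| ≤ N := fun i => by
    rw [Int.abs_eq_natAbs]
    exact_mod_cast hcoord i
  exact ⟨fun i => (abs_le.1 (habs i)).1, fun i => (abs_le.1 (habs i)).2⟩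

theorem exists_forall_ge_of_tendsto_of_lt {c : ℝ} (hu : Tendsto u (atInfty n) (nhds c)) {x : Lat n}
    (hx : c < u x) : ∃ z, ∀ y, u y ≤ u z := by
  refine continuous_of_discreteTopology.exists_forall_ge' x ?_
  rw [cocompact_eq_cofinite]
  exact cofinite_le_atInfty ((hu.eventually_lt_const hx).mono fun _ => le_of_lt)

theorem lapl_zero : lapl (0 : Lat n → ℝ) = 0 := by
  ext x
  simp [lapl]

theorem lapl_nonpos_of_forall_le {z : Lat n} (hz : ∀ y, u y ≤ u z) : lapl u z ≤ 0 :=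
  Finset.sum_nonpos fun i _ => by linarith [hz (z + unitVec i), hz (z - unitVec i)]

theorem nonpos_of_lapl_pos (hu : Tendsto u (atInfty n) (nhds 0))
    (hpos : ∀ x, 0 < u x → 0 < lapl u x) : u ≤ 0 := by
  intro x
  by_contra! hx
  obtain ⟨z, hz⟩ := exists_forall_ge_of_tendsto_of_lt hu hx
  exact (lapl_nonpos_of_forall_le hz).not_gt (hpos z (hx.trans_le (hz x)))

theorem lapl_add_two_mul (u : Lat n → ℝ) (x : Lat n) :
    lapl u x + 2 * n * u x = ∑ i, (u (x + unitVec i) + u (x - unitVec i)) := by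
  simp only [lapl, Finset.sum_sub_distrib, Finset.sum_const, Finset.card_univ, Fintype.card_fin,
    nsmul_eq_mul]
  ring

theorem lapl_add_two_mul_mono (huv : u ≤ v) (x : Lat n) :
    lapl u x + 2 * n * u x ≤ lapl v x + 2 * n * v x := by
  rw [lapl_add_two_mul, lapl_add_two_mul]
  exact Finset.sum_le_sum fun _ _ => add_le_add (huv _) (huv _)

theorem dirac_nonneg (p : Lat n) : 0 ≤ dirac p := fun x => by
  unfold dirac
  split_ifs <;> norm_num

theorem four_pi_mul_sum_dirac_nonneg {ι : Type*} [Fintype ι] (m : ι → ℕ) (p : ι → Lat n) :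
    0 ≤ fun x => 4 * Real.pi * ∑ j, (m j : ℝ) * dirac (p j) x := fun x =>
  mul_nonneg (by positivity)
    (Finset.sum_nonneg fun j _ => mul_nonneg (Nat.cast_nonneg _) (dirac_nonneg (p j) x))

end Lattice

section System

variable {n : ℕ} {lam lam₁ lam₂ : ℝ} {g h u v U V : Lat n → ℝ}

/-- The right-hand side `λ eᵛ (eᵘ - 1) + g` of the equation for `u`; that of the equation for `v` is
`reaction lam h v u`. -/
def reaction (lam : ℝ) (g u v : Lat n → ℝ) (x : Lat n) : ℝ :=
  lam * exp (v x) * (exp (u x) - 1) + g x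

/-- `(u, v)` is a subsolution of the system; nothing is required at infinity. -/
def IsSubsol (lam : ℝ) (g h u v : Lat n → ℝ) : Prop :=
  reaction lam g u v ≤ lapl u ∧ reaction lam h v u ≤ lapl v

/-- `(u, v)` is a supersolution of the system; nothing is required at infinity. -/
def IsSupersol (lam : ℝ) (g h u v : Lat n → ℝ) : Prop :=
  lapl u ≤ reaction lam g u v ∧ lapl v ≤ reaction lam h v u

theorem IsTopSol.isSubsol (hsol : IsTopSol lam g h u v) : IsSubsol lam g h u v :=
  ⟨fun x => (hsol.1 x).ge, fun x => (hsol.2.1 x).ge⟩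

theorem isSupersol_zero (hg : 0 ≤ g) (hh : 0 ≤ h) : IsSupersol lam g h 0 0 := by
  have hreaction : ∀ f : Lat n → ℝ, reaction lam f 0 0 = f := fun f => by
    ext x
    simp [reaction]
  simp only [IsSupersol, lapl_zero, hreaction]
  exact ⟨hg, hh⟩

theorem nonpos_of_reaction_le_lapl (hlam : 0 < lam) (hg : 0 ≤ g)
    (hu : reaction lam g u v ≤ lapl u) (hu₀ : Tendsto u (atInfty n) (nhds 0)) : u ≤ 0 :=
  nonpos_of_lapl_pos hu₀ fun x hx => by
    have hexp : 0 < exp (u x) - 1 := sub_pos.2 (one_lt_exp_iff.2 hx)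
    exact (add_pos_of_pos_of_nonneg (by positivity) (hg x)).trans_le (hu x)

theorem reaction_anti_lam (hlam : lam₁ ≤ lam₂) (hu : u ≤ 0) :
    reaction lam₂ g u v ≤ reaction lam₁ g u v := fun x =>
  add_le_add_left (mul_le_mul_of_nonpos_right
    (mul_le_mul_of_nonneg_right hlam (exp_pos _).le)
    (sub_nonpos.2 (exp_le_one_iff.2 (hu x)))) _

theorem IsSubsol.mono_lam (hsub : IsSubsol lam₁ g h u v) (hlam : lam₁ ≤ lam₂) (hu : u ≤ 0)
    (hv : v ≤ 0) : IsSubsol lam₂ g h u v :=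
  ⟨(reaction_anti_lam hlam hu).trans hsub.1, (reaction_anti_lam hlam hv).trans hsub.2⟩

/-- One explicit Euler step for `∂ₜu = Δu - reaction lam g u v`. The step length `1 / (2n + lam)` is
short enough for the step to be order preserving on nonpositive pairs. -/
def eulerStep (lam : ℝ) (g u v : Lat n → ℝ) (x : Lat n) : ℝ :=
  u x + (lapl u x - reaction lam g u v x) / (2 * n + lam)

theorem le_eulerStep_iff (hlam : 0 < lam) :
    u ≤ eulerStep lam g u v ↔ reaction lam g u v ≤ lapl u :=
  forall_congr' fun x => by
    have hden : (0 : ℝ) < 2 * n + lam := by positivity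
    rw [eulerStep, le_add_iff_nonneg_right, le_div_iff₀ hden, zero_mul, sub_nonneg]

theorem eulerStep_le_iff (hlam : 0 < lam) :
    eulerStep lam g u v ≤ u ↔ lapl u ≤ reaction lam g u v :=
  forall_congr' fun x => by
    have hden : (0 : ℝ) < 2 * n + lam := by positivity
    rw [eulerStep, add_le_iff_nonpos_right, div_le_iff₀ hden, zero_mul, sub_nonpos]

theorem eulerStep_eq_iff (hlam : 0 < lam) :
    eulerStep lam g u v = u ↔ lapl u = reaction lam g u v := by
  rw [le_antisymm_iff, le_antisymm_iff, eulerStep_le_iff hlam, le_eulerStep_iff hlam]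

theorem eulerStep_eq_div (hlam : 0 < lam) (x : Lat n) :
    eulerStep lam g u v x =
      (lapl u x + 2 * n * u x + lam * (u x - exp (v x) * (exp (u x) - 1)) - g x) /
        (2 * n + lam) := by
  have hden : (2 * n + lam : ℝ) ≠ 0 := by positivity
  rw [eulerStep, reaction]
  field_simp
  ring

theorem eulerStep_mono (hlam : 0 < lam) (hu : u ≤ U) (hv : v ≤ V) (hU : U ≤ 0) (hV : V ≤ 0) :
    eulerStep lam g u v ≤ eulerStep lam g U V := fun x => by
  have hreaction : u x - exp (v x) * (exp (u x) - 1) ≤ U x - exp (V x) * (exp (U x) - 1) :=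
    monotoneOn_sub_exp_mul_exp_sub_one (a := (u x, v x)) (b := (U x, V x))
      ⟨(hu x).trans (hU x), (hv x).trans (hV x)⟩ ⟨hU x, hV x⟩ ⟨hu x, hv x⟩
  rw [eulerStep_eq_div hlam, eulerStep_eq_div hlam]
  gcongr ?_ / _
  exact sub_le_sub_right (add_le_add (lapl_add_two_mul_mono hu x)
    (mul_le_mul_of_nonneg_left hreaction hlam.le)) _

theorem exists_solution_mem_Icc (hlam : 0 < lam) (hsub : IsSubsol lam g h u v)
    (hsuper : IsSupersol lam g h U V) (hu : u ≤ U) (hv : v ≤ V) (hU : U ≤ 0) (hV : V ≤ 0) :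
    ∃ u' ∈ Set.Icc u U, ∃ v' ∈ Set.Icc v V,
      lapl u' = reaction lam g u' v' ∧ lapl v' = reaction lam h v' u' := by
  let T : (Lat n → ℝ) × (Lat n → ℝ) → (Lat n → ℝ) × (Lat n → ℝ) :=
    fun w => (eulerStep lam g w.1 w.2, eulerStep lam h w.2 w.1)
  have hmono : MonotoneOn T (Set.Icc (u, v) (U, V)) := fun w _ z hz hwz =>
    have hz₁ : z.1 ≤ 0 := hz.2.1.trans hU
    have hz₂ : z.2 ≤ 0 := hz.2.2.trans hV
    ⟨eulerStep_mono hlam hwz.1 hwz.2 hz₁ hz₂, eulerStep_mono hlam hwz.2 hwz.1 hz₂ hz₁⟩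
  have hle : (u, v) ≤ T (u, v) :=
    ⟨(le_eulerStep_iff hlam).2 hsub.1, (le_eulerStep_iff hlam).2 hsub.2⟩
  have hge : T (U, V) ≤ (U, V) :=
    ⟨(eulerStep_le_iff hlam).2 hsuper.1, (eulerStep_le_iff hlam).2 hsuper.2⟩
  have huv : (u, v) ≤ (U, V) := ⟨hu, hv⟩
  obtain ⟨c, hc⟩ := exists_isLUB_prod (s := {w ∈ Set.Icc (u, v) (U, V) | w ≤ T w})
    ⟨(u, v), ⟨le_rfl, huv⟩, hle⟩ ⟨(U, V), fun w hw => hw.1.2⟩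
  obtain ⟨⟨hlower, hupper⟩, hfix⟩ := mem_Icc_and_isFixedPt_of_isLUB hmono huv hle hge hc
  exact ⟨c.1, ⟨hlower.1, hupper.1⟩, c.2, ⟨hlower.2, hupper.2⟩,
    (eulerStep_eq_iff hlam).1 (congrArg Prod.fst hfix),
    (eulerStep_eq_iff hlam).1 (congrArg Prod.snd hfix)⟩

theorem IsSubsol.exists_isTopSol_ge (hsub : IsSubsol lam g h u v) (hlam : 0 < lam) (hg : 0 ≤ g)
    (hh : 0 ≤ h) (hu : u ≤ 0) (hv : v ≤ 0) (hu₀ : Tendsto u (atInfty n) (nhds 0))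
    (hv₀ : Tendsto v (atInfty n) (nhds 0)) :
    ∃ u' v' : Lat n → ℝ, IsTopSol lam g h u' v' ∧ u ≤ u' ∧ v ≤ v' := by
  obtain ⟨u', hu', v', hv', hequ, heqv⟩ :=
    exists_solution_mem_Icc hlam hsub (isSupersol_zero hg hh) hu hv le_rfl le_rfl
  exact ⟨u', v', ⟨congrFun hequ, congrFun heqv,
    tendsto_of_tendsto_of_tendsto_of_le_of_le hu₀ tendsto_const_nhds hu'.1 hu'.2,
    tendsto_of_tendsto_of_tendsto_of_le_of_le hv₀ tendsto_const_nhds hv'.1 hv'.2⟩, hu'.1, hv'.1⟩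

theorem maximal_solution_monotone_in_lambda_general (hg : 0 ≤ g) (hh : 0 ≤ h) (hlam₁ : 0 < lam₁)
    (hlam : lam₁ ≤ lam₂) (hsub : IsSubsol lam₁ g h u v) (hu₀ : Tendsto u (atInfty n) (nhds 0))
    (hv₀ : Tendsto v (atInfty n) (nhds 0)) (hmax : IsMaxTopSol lam₂ g h U V) :
    u ≤ U ∧ v ≤ V := by
  have hu : u ≤ 0 := nonpos_of_reaction_le_lapl hlam₁ hg hsub.1 hu₀
  have hv : v ≤ 0 := nonpos_of_reaction_le_lapl hlam₁ hh hsub.2 hv₀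
  have hsub₂ : IsSubsol lam₂ g h u v := hsub.mono_lam hlam hu hv
  obtain ⟨u', v', hsol, hu', hv'⟩ :=
    hsub₂.exists_isTopSol_ge (hlam₁.trans_le hlam) hg hh hu hv hu₀ hv₀
  obtain ⟨hU, hV⟩ := hmax.2 u' v' hsol
  exact ⟨hu'.trans hU, hv'.trans hV⟩

end System

/-- monotonicity in λ of the maximal topological solution:
if 0 < λ₁ < λ₂ then u*_{λ₁} ≤ u*_{λ₂} and v*_{λ₁} ≤ v*_{λ₂} on ℤⁿ. -/
theorem maximal_solution_monotone_in_lambda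
    {n : ℕ} (hn : 2 ≤ n)
    {k₁ k₂ : ℕ} (m : Fin k₁ → ℕ) (nn : Fin k₂ → ℕ)
    (p : Fin k₁ → Lat n) (q : Fin k₂ → Lat n)
    (g h : Lat n → ℝ)
    (hg : g = fun x => 4 * Real.pi * ∑ j, (m j : ℝ) * dirac (p j) x)
    (hh : h = fun x => 4 * Real.pi * ∑ j, (nn j : ℝ) * dirac (q j) x)
    (lam₁ lam₂ : ℝ) (hlam₁ : 0 < lam₁) (hlam : lam₁ < lam₂)
    (u₁ v₁ u₂ v₂ : Lat n → ℝ)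
    (hmax₁ : IsMaxTopSol lam₁ g h u₁ v₁)
    (hmax₂ : IsMaxTopSol lam₂ g h u₂ v₂) :
    (∀ x, u₁ x ≤ u₂ x) ∧ (∀ x, v₁ x ≤ v₂ x) :=
  have ⟨hsol, _⟩ := hmax₁
  maximal_solution_monotone_in_lambda_general (hg ▸ four_pi_mul_sum_dirac_nonneg m p)
    (hh ▸ four_pi_mul_sum_dirac_nonneg nn q) hlam₁ hlam.le hsol.isSubsol hsol.2.2.1 hsol.2.2.2 hmax₂

end CS
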